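/- arXiv:1610.00179 — 9 statements merged into one kernel-verified Lean document; each statement's English description precedes it below -/
import Mathlib

section
/- If a b-path P in a bidirected graph contains a positive cycle C (as a consecutive closed subchain), then P = C. -/
/-- A signed vertex `x^α` : a vertex together with a sign in `ℤˣ`. -/
abbrev SV (V : Type) := V × ℤˣ

/-- A dart : an ordered signed edge `(x^α, y^β)`, traversed from `x` (entered with
half-edge sign `α`) to `y` (left with half-edge sign `β`). -/
abbrev BDart (V : Type) := SV V × SV V

/-- A bidirected graph on the vertex set `V`, given as its set of (unordered) signed
edges `{x^α, y^β}`; the half-edge of such an edge at `x` has sign `α` and the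
half-edge at `y` has sign `β`. -/
abbrev BGraph (V : Type) := Set (Sym2 (SV V))

/-- `IsWalk G x l y` : the list of darts `l` forms a chain from `x` to `y` in `G`. -/
def IsWalk {V : Type} (G : BGraph V) : V → List (BDart V) → V → Prop
  | x, [], y => x = y
  | x, d :: l, y => d.1.1 = x ∧ Sym2.mk d.1 d.2 ∈ G ∧ IsWalk G d.2.1 l y

/-- `IsBWalk G x α l y β` : `l` is a b-walk from `x^α` to `y^β` : a nonempty chain
from `x` to `y` whose first half-edge sign at `x` is `α`, whose last half-edge sign
at `y` is `β`, and such that at every internal vertex occurrence the two incident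
half-edge signs sum to `0`. -/
def IsBWalk {V : Type} (G : BGraph V) (x : V) (α : ℤˣ) (l : List (BDart V)) (y : V)
    (β : ℤˣ) : Prop :=
  l ≠ [] ∧ IsWalk G x l y ∧ (∀ d ∈ l.head?, d.1.2 = α) ∧ (∀ d ∈ l.getLast?, d.2.2 = β) ∧
    List.Chain' (fun d d' => ((d.2.2 : ℤ) + (d'.1.2 : ℤ) = 0)) l

/-- `IsBPath G x α l y β` : `l` is a b-path from `x^α` to `y^β` : a b-walk from `x^α`
to `y^β` that is minimal, i.e. no proper subsequence of its darts, taken in the same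
order, is a b-walk from `x^α` to `y^β`. -/
def IsBPath {V : Type} (G : BGraph V) (x : V) (α : ℤˣ) (l : List (BDart V)) (y : V)
    (β : ℤˣ) : Prop :=
  IsBWalk G x α l y β ∧ ∀ l', l'.Sublist l → l' ≠ l → ¬ IsBWalk G x α l' y β

/-- The transitive closure `Ft G` : its edges are the edges `{x^α, y^β}` for which
`G` contains a b-path from `x^α` to `y^β`. -/
def Ft {V : Type} (G : BGraph V) : BGraph V :=
  {e | ∃ x α y β l, IsBPath G x α l y β ∧ e = Sym2.mk (x, α) (y, β)}

/-- The transitive closure `ft G H` of the partial graph `H` within `G` : the edges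
of `H` together with every edge `{x^α, y^β}` of `G` for which `H` contains a b-path
from `x^α` to `y^β`. -/
def ft {V : Type} (G H : BGraph V) : BGraph V :=
  H ∪ {e | e ∈ G ∧ ∃ x α y β l, IsBPath H x α l y β ∧ e = Sym2.mk (x, α) (y, β)}

/-- `IsTR G H` : `H` is a transitive reduction of `G` : a partial graph of `G`
minimal with the property `ft G H = G`. -/
def IsTR {V : Type} (G H : BGraph V) : Prop :=
  H ⊆ G ∧ ft G H = G ∧ ∀ H', H' ⊂ H → ft G H' ≠ G

/-- The sign of the edge underlying a dart `(x^α, y^β)` : `σ(e) = -αβ`. -/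
def dartSign {V : Type} (d : BDart V) : ℤˣ := -(d.1.2 * d.2.2)

/-- A cycle at `x` in a bidirected graph : a nonempty closed chain with pairwise
distinct edges and pairwise distinct vertices. -/
def IsCycle {V : Type} (G : BGraph V) (x : V) (l : List (BDart V)) : Prop :=
  l ≠ [] ∧ IsWalk G x l x ∧ (l.map fun d => Sym2.mk d.1 d.2).Nodup ∧ (l.map fun d => d.1.1).Nodup

/-- A bidirected graph is balanced if every cycle is positive. -/
def IsBalanced {V : Type} (G : BGraph V) : Prop :=
  ∀ x l, IsCycle G x l → (l.map dartSign).prod = 1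

/-- A bidirected graph is all positive if every edge has sign `+1`. -/
def IsAllPositive {V : Type} (G : BGraph V) : Prop :=
  ∀ d : BDart V, Sym2.mk d.1 d.2 ∈ G → dartSign d = 1

/-- Signed-state version of b-walks: `a` is the sign required of the next half-edge. -/
def BState {V : Type} (G : BGraph V) : V → ℤˣ → List (BDart V) → V → ℤˣ → Prop
  | x, a, [], y, b => x = y ∧ a = b
  | x, a, d :: l, y, b =>
      d.1.1 = x ∧ d.1.2 = a ∧ Sym2.mk d.1 d.2 ∈ G ∧ BState G d.2.1 (-d.2.2) l y b

theorem units_add_zero (a b : ℤˣ) : ((a : ℤ) + (b : ℤ) = 0) ↔ b = -a := by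
  rcases Int.units_eq_one_or a with rfl | rfl <;> rcases Int.units_eq_one_or b with rfl | rfl <;>
    decide

theorem bwalk_iff {V : Type} (G : BGraph V) (l : List (BDart V)) (x : V) (a : ℤˣ) (y : V)
    (b : ℤˣ) : IsBWalk G x a l y b ↔ l ≠ [] ∧ BState G x a l y (-b) := by
  induction l generalizing x a with
  | nil => simp [IsBWalk]
  | cons d l ih =>
    cases l with
    | nil =>
      simp [IsBWalk, BState, IsWalk]
      tauto
    | cons d' l =>
      have := ih d.2.1 (-d.2.2)
      simp only [IsBWalk, ne_eq, reduceCtorEq, not_false_eq_true, true_and, List.head?_cons,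
        Option.mem_def, Option.some.injEq, forall_eq', List.getLast?_cons_cons,
        List.isChain_cons_cons, List.Chain', units_add_zero] at this ⊢
      rw [BState, ← this, IsWalk]
      tauto

theorem bstate_append {V : Type} (G : BGraph V) (l m : List (BDart V)) (x : V) (a : ℤˣ) (y : V)
    (b : ℤˣ) : BState G x a (l ++ m) y b ↔
      ∃ z c, BState G x a l z c ∧ BState G z c m y b := by
  induction l generalizing x a with
  | nil => simp [BState]
  | cons d l ih =>
    simp only [List.cons_append, BState, ih]
    constructor
    · rintro ⟨h1, h2, h3, z, c, h4, h5⟩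
      exact ⟨z, c, ⟨h1, h2, h3, h4⟩, h5⟩
    · rintro ⟨z, c, ⟨h1, h2, h3, h4⟩, h5⟩
      exact ⟨h1, h2, h3, z, c, h4, h5⟩

theorem bstate_sign {V : Type} (G : BGraph V) (l : List (BDart V)) (x : V) (a : ℤˣ) (y : V)
    (b : ℤˣ) (h : BState G x a l y b) : b = a * (l.map dartSign).prod := by
  induction l generalizing x a with
  | nil => simp [h.2]
  | cons d l ih =>
    obtain ⟨-, rfl, -, h⟩ := h
    rw [ih _ _ h, List.map_cons, List.prod_cons, dartSign]
    rcases Int.units_eq_one_or d.1.2 with h | h <;> simp [h]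

theorem bstate_end {V : Type} (G : BGraph V) (l : List (BDart V)) (x : V) (a : ℤˣ) (y : V)
    (b : ℤˣ) (z : V) (h : BState G x a l y b) (h' : IsWalk G x l z) : y = z := by
  induction l generalizing x a with
  | nil => exact h.1.symm.trans h'
  | cons d l ih => exact ih _ _ h.2.2.2 h'.2.2

/-- If a b-path `P` in a bidirected graph contains a positive cycle `C`
as a consecutive closed subchain, then `P = C`. -/
theorem stmt5 {V : Type} [Fintype V] (G : BGraph V) (x y v : V) (α β : ℤˣ)
    (l l₁ c l₂ : List (BDart V)) (hP : IsBPath G x α l y β)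
    (hsplit : l = l₁ ++ c ++ l₂) (hC : IsCycle G v c)
    (hpos : (c.map dartSign).prod = 1) : l = c := by
  subst hsplit
  obtain ⟨hw, hmin⟩ := hP
  obtain ⟨hne, hwalk, -, -⟩ := hC
  by_cases he : l₁ ++ l₂ = []
  · obtain ⟨rfl, rfl⟩ := List.append_eq_nil_iff.1 he
    simp
  · exfalso
    refine hmin (l₁ ++ l₂) (by simp) ?_ ?_
    · intro h
      have := congrArg List.length h
      have hc := List.length_pos_iff.2 hne
      simp at this
      exact hne this
    · rw [bwalk_iff] at hw ⊢
      refine ⟨he, ?_⟩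
      obtain ⟨-, hs⟩ := hw
      rw [bstate_append] at hs ⊢
      obtain ⟨z, s, hs, h2⟩ := hs
      rw [bstate_append] at hs
      obtain ⟨w, t, h1, hc⟩ := hs
      have hst := bstate_sign G c w t z s hc
      rw [hpos, mul_one] at hst
      have hwv : w = v := by
        cases c with
        | nil => exact absurd rfl hne
        | cons d c => exact hc.1.symm.trans hwalk.1
      subst hwv
      have hz := bstate_end G c w t z s w hc hwalk
      subst hz hst
      exact ⟨_, _, h1, h2⟩
end

section
/- The transitive closure operator Ft on bidirected graphs is an abstract closure operator: (i) G_τ is a partial graph of Ft(G_τ); (ii) if H_τ is a partial graph of G_τ, then Ft(H_τ) is a partial graph of Ft(G_τ); (iii) Ft(Ft(G_τ)) = Ft(G_τ). -/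
/-- Reachability by b-walks, as an inductive relation. -/
inductive BReach {V : Type} (G : BGraph V) : SV V → SV V → Prop
  | edge (a b : SV V) (h : Sym2.mk a b ∈ G) : BReach G a b
  | trans (a : SV V) (y : V) (β : ℤˣ) (c : SV V) (h₁ : BReach G a (y, β))
      (h₂ : BReach G (y, -β) c) : BReach G a c

theorem BReach.symm {V : Type} {G : BGraph V} {a b : SV V} (h : BReach G a b) :
    BReach G b a := by
  induction h with
  | edge a b h => exact .edge _ _ (by rwa [Sym2.eq_swap])
  | trans a y β c _ _ ih₁ ih₂ =>
    refine .trans _ y (-β) _ ih₂ ?_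
    rwa [neg_neg]

theorem BReach.mono {V : Type} {G H : BGraph V} (hGH : H ⊆ G) {a b : SV V}
    (h : BReach H a b) : BReach G a b := by
  induction h with
  | edge a b h => exact .edge _ _ (hGH h)
  | trans a y β c _ _ ih₁ ih₂ => exact .trans _ y β _ ih₁ ih₂

theorem isBWalk_single {V : Type} (G : BGraph V) (x : V) (α : ℤˣ) (d : BDart V) (y : V)
    (β : ℤˣ) : IsBWalk G x α [d] y β ↔ d.1 = (x, α) ∧ Sym2.mk d.1 d.2 ∈ G ∧ d.2 = (y, β) := by
  obtain ⟨⟨a, b⟩, ⟨c, e⟩⟩ := d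
  simp [IsBWalk, IsWalk]
  tauto

theorem isBWalk_cons {V : Type} (G : BGraph V) (x : V) (α : ℤˣ) (d d' : BDart V)
    (l : List (BDart V)) (y : V) (β : ℤˣ) :
    IsBWalk G x α (d :: d' :: l) y β ↔ d.1 = (x, α) ∧ Sym2.mk d.1 d.2 ∈ G ∧
      IsBWalk G d.2.1 (-d.2.2) (d' :: l) y β := by
  obtain ⟨⟨a, b⟩, ⟨c, e⟩⟩ := d
  simp [IsBWalk, IsWalk, units_add_zero, List.Chain', List.isChain_cons_cons, List.getLast?_cons_cons]
  tauto

theorem isBWalk_append {V : Type} (G : BGraph V) (l l' : List (BDart V)) (x y z : V)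
    (α β γ : ℤˣ) (h : IsBWalk G x α l y β) (h' : IsBWalk G y (-β) l' z γ) :
    IsBWalk G x α (l ++ l') z γ := by
  induction l generalizing x α with
  | nil => exact absurd rfl h.1
  | cons d l ih =>
    cases l with
    | nil =>
      rw [isBWalk_single] at h
      cases l' with
      | nil => exact absurd rfl h'.1
      | cons d' l' =>
        simp only [List.cons_append, List.nil_append]
        rw [isBWalk_cons]
        refine ⟨h.1, h.2.1, ?_⟩
        rw [h.2.2]
        exact h'
    | cons d₂ l =>
      rw [isBWalk_cons] at h
      simp only [List.cons_append] at ih ⊢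
      rw [isBWalk_cons]
      exact ⟨h.1, h.2.1, ih _ _ h.2.2⟩

theorem BReach.of_isBWalk {V : Type} {G : BGraph V} {l : List (BDart V)} {x y : V}
    {α β : ℤˣ} (h : IsBWalk G x α l y β) : BReach G (x, α) (y, β) := by
  induction l generalizing x α with
  | nil => exact absurd rfl h.1
  | cons d l ih =>
    cases l with
    | nil =>
      rw [isBWalk_single] at h
      obtain ⟨h₁, h₂, h₃⟩ := h
      rw [h₁, h₃] at h₂
      exact .edge _ _ h₂
    | cons d₂ l =>
      rw [isBWalk_cons] at h
      obtain ⟨h₁, h₂, h₃⟩ := h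
      rw [h₁] at h₂
      exact .trans _ d.2.1 d.2.2 _ (.edge _ _ h₂) (ih h₃)

theorem BReach.exists_isBWalk {V : Type} {G : BGraph V} {a b : SV V} (h : BReach G a b) :
    ∃ l, IsBWalk G a.1 a.2 l b.1 b.2 := by
  induction h with
  | edge a b h => exact ⟨[(a, b)], by rw [isBWalk_single]; exact ⟨rfl, h, rfl⟩⟩
  | trans a y β c _ _ ih₁ ih₂ =>
    obtain ⟨l₁, h₁⟩ := ih₁
    obtain ⟨l₂, h₂⟩ := ih₂
    exact ⟨l₁ ++ l₂, isBWalk_append G _ _ _ _ _ _ _ _ h₁ h₂⟩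

theorem exists_isBPath {V : Type} {G : BGraph V} {x y : V} {α β : ℤˣ} (n : ℕ) :
    ∀ l : List (BDart V), l.length = n → IsBWalk G x α l y β →
      ∃ l', IsBPath G x α l' y β := by
  induction n using Nat.strong_induction_on with
  | _ n ih =>
    intro l hl h
    by_cases hp : IsBPath G x α l y β
    · exact ⟨l, hp⟩
    · have : ∃ l', l'.Sublist l ∧ l' ≠ l ∧ IsBWalk G x α l' y β := by
        by_contra hc
        exact hp ⟨h, fun l' h₁ h₂ h₃ => hc ⟨l', h₁, h₂, h₃⟩⟩
      obtain ⟨l', h₁, h₂, h₃⟩ := this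
      refine ih l'.length ?_ l' rfl h₃
      rw [← hl]
      exact lt_of_le_of_ne h₁.length_le fun he => h₂ (h₁.eq_of_length he)

theorem mem_Ft {V : Type} (G : BGraph V) (a b : SV V) :
    Sym2.mk a b ∈ Ft G ↔ BReach G a b := by
  constructor
  · rintro ⟨x, α, y, β, l, h, he⟩
    have hr := BReach.of_isBWalk h.1
    rcases Sym2.eq_iff.1 he with ⟨rfl, rfl⟩ | ⟨rfl, rfl⟩
    · exact hr
    · exact hr.symm
  · intro h
    obtain ⟨l, hl⟩ := h.exists_isBWalk
    obtain ⟨l', hl'⟩ := exists_isBPath _ l rfl hl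
    exact ⟨a.1, a.2, b.1, b.2, l', hl', rfl⟩

theorem BReach.of_Ft {V : Type} {G : BGraph V} {a b : SV V} (h : BReach (Ft G) a b) :
    BReach G a b := by
  induction h with
  | edge a b h => exact (mem_Ft _ _ _).1 h
  | trans a y β c _ _ ih₁ ih₂ => exact .trans _ y β _ ih₁ ih₂

/-- The transitive closure operator `Ft` is an abstract closure
operator : (i) `G` is a partial graph of `Ft G`; (ii) if `H` is a partial graph of
`G` then `Ft H` is a partial graph of `Ft G`; (iii) `Ft (Ft G) = Ft G`. -/
theorem stmt6 {V : Type} [Fintype V] (G H : BGraph V) :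
    G ⊆ Ft G ∧ (H ⊆ G → Ft H ⊆ Ft G) ∧ Ft (Ft G) = Ft G := by
  have hsub : ∀ K : BGraph V, K ⊆ Ft K := by
    intro K e
    induction e using Sym2.ind with
    | _ a b => exact fun he => (mem_Ft _ _ _).2 (.edge _ _ he)
  refine ⟨hsub G, ?_, ?_⟩
  · intro hHG e
    induction e using Sym2.ind with
    | _ a b => exact fun he => (mem_Ft _ _ _).2 (((mem_Ft _ _ _).1 he).mono hHG)
  · refine Set.Subset.antisymm ?_ (hsub _)
    intro e
    induction e using Sym2.ind with
    | _ a b => exact fun he => (mem_Ft _ _ _).2 ((mem_Ft _ _ _).1 he).of_Ft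
end

section
/- The transitive closure of an all-positive bidirected graph is all positive, and the transitive closure of a balanced bidirected graph is balanced. -/
theorem walk_append {V : Type} (G : BGraph V) (a b : List (BDart V)) (x y : V) :
    IsWalk G x (a ++ b) y ↔ ∃ z, IsWalk G x a z ∧ IsWalk G z b y := by
  induction a generalizing x with
  | nil => simp [IsWalk]
  | cons d a ih =>
    simp only [List.cons_append, IsWalk, ih]
    constructor
    · rintro ⟨h1, h2, z, h3, h4⟩
      exact ⟨z, ⟨h1, h2, h3⟩, h4⟩
    · rintro ⟨z, ⟨h1, h2, h3⟩, h4⟩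
      exact ⟨h1, h2, z, h3, h4⟩

theorem walk_reverse {V : Type} (G : BGraph V) (l : List (BDart V)) (x y : V)
    (h : IsWalk G x l y) :
    ∃ l', IsWalk G y l' x ∧ (l'.map dartSign).prod = (l.map dartSign).prod := by
  induction l generalizing x with
  | nil => exact ⟨[], Eq.symm h, rfl⟩
  | cons d l ih =>
    obtain ⟨h1, h2, h3⟩ := h
    obtain ⟨l', h4, h5⟩ := ih _ h3
    refine ⟨l' ++ [(d.2, d.1)], (walk_append _ _ _ _ _).2 ⟨_, h4, rfl, ?_, h1⟩, ?_⟩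
    · rw [Sym2.eq_swap]; exact h2
    · simp [h5, dartSign, mul_comm]

theorem sign_sq {V : Type} (d : BDart V) : dartSign d * dartSign d = 1 :=
  Int.units_mul_self _

theorem split_of_not_nodup {A B : Type} (f : A → B) (l : List A) (h : ¬ (l.map f).Nodup) :
    ∃ a d b d' c, l = a ++ d :: (b ++ d' :: c) ∧ f d = f d' := by
  induction l with
  | nil => simp at h
  | cons e l ih =>
    by_cases he : f e ∈ l.map f
    · obtain ⟨d', hd', hf⟩ := List.mem_map.1 he
      obtain ⟨b, c, rfl⟩ := List.append_of_mem hd'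
      exact ⟨[], e, b, d', c, rfl, hf.symm⟩
    · have : ¬ (l.map f).Nodup := fun hn => h (by rw [List.map_cons, List.nodup_cons]; exact ⟨he, hn⟩)
      obtain ⟨a, d, b, d', c, rfl, hf⟩ := ih this
      exact ⟨e :: a, d, b, d', c, rfl, hf⟩

theorem closed_walk {V : Type} (G : BGraph V) (hG : IsBalanced G) (n : ℕ) :
    ∀ (l : List (BDart V)) (x : V), l.length = n → IsWalk G x l x →
      (l.map dartSign).prod = 1 := by
  induction n using Nat.strong_induction_on with
  | _ n ih =>
  intro l x hn hl
  by_cases h0 : l = []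
  · simp [h0]
  by_cases hv : (l.map fun d => d.1.1).Nodup
  · by_cases he : (l.map fun d => Sym2.mk d.1 d.2).Nodup
    · exact hG x l ⟨h0, hl, he, hv⟩
    · obtain ⟨a, d, b, d', c, rfl, hf⟩ := split_of_not_nodup _ _ he
      obtain ⟨z, ha, rfl, hd, hr⟩ := (walk_append _ _ _ _ _).1 hl
      obtain ⟨z, hb, rfl, hd', hc⟩ := (walk_append _ _ _ _ _).1 hr
      have hne : d.1.1 ≠ d'.1.1 := by
        intro h
        rw [List.map_append, List.nodup_append] at hv
        have := hv.2.1
        simp only [List.map_cons, List.nodup_cons, List.map_append, List.mem_append] at this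
        exact this.1 (Or.inr (by simp [h]))
      simp only [Sym2.eq_iff] at hf
      rcases hf with ⟨h1, -⟩ | ⟨h1, h2⟩
      · exact absurd (by rw [h1]) hne
      rw [← h2] at hb
      rw [← h1] at hc
      simp only [List.length_append, List.length_cons] at hn
      have p1 := ih b.length (by omega) b _ rfl hb
      have p2 := ih (a ++ c).length (by simp; omega) (a ++ c) _ rfl
        ((walk_append _ _ _ _ _).2 ⟨_, ha, hc⟩)
      have hs : dartSign d' = dartSign d := by simp [dartSign, h1, h2, mul_comm]
      simp only [List.map_append, List.prod_append, List.map_cons, List.prod_cons, p1, hs] at p2 ⊢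
      have := sign_sq d
      calc _ = (dartSign d * dartSign d) * ((a.map dartSign).prod * (c.map dartSign).prod) := by
              simp only [one_mul, mul_left_comm, mul_assoc]
        _ = 1 := by rw [this, p2, one_mul]
  · obtain ⟨a, d, b, d', c, rfl, hf⟩ := split_of_not_nodup _ _ hv
    obtain ⟨z, ha, rfl, hd, hr⟩ := (walk_append _ _ _ _ _).1 hl
    obtain ⟨z, hb, rfl, hd', hc⟩ := (walk_append _ _ _ _ _).1 hr
    simp only [List.length_append, List.length_cons] at hn
    have p1 := ih (d :: b).length (by simp; omega) (d :: b) d.1.1 rfl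
      ⟨rfl, hd, by rw [hf]; exact hb⟩
    have p2 := ih (a ++ d' :: c).length (by simp; omega) (a ++ d' :: c) _ rfl
      ((walk_append _ _ _ _ _).2 ⟨_, ha, hf.symm, hd', hc⟩)
    simp only [List.map_append, List.prod_append, List.map_cons, List.prod_cons] at p1 p2 ⊢
    rw [← mul_assoc (dartSign d), p1, one_mul, p2]

theorem bwalk_sign {V : Type} (G : BGraph V) (l : List (BDart V)) (x : V) (α : ℤˣ) (y : V)
    (β : ℤˣ) (h : IsBWalk G x α l y β) : (l.map dartSign).prod = -(α * β) := by
  induction l generalizing x α with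
  | nil => exact absurd rfl h.1
  | cons d l ih =>
    obtain ⟨-, hw, hh, hl, hc⟩ := h
    have hα : d.1.2 = α := hh d rfl
    subst hα
    cases l with
    | nil =>
      have hβ : d.2.2 = β := hl d rfl
      simp [dartSign, hβ]
    | cons d' l =>
      have hc' := List.isChain_cons_cons.1 hc
      have := ih d'.1.1 d'.1.2 ⟨by simp, ⟨rfl, hw.2.2.2⟩, by simp, by
        intro e he; exact hl e (by simpa [List.getLast?_cons_cons] using he), hc'.2⟩
      rw [List.map_cons, List.prod_cons, this]
      have h2 : d'.1.2 = - d.2.2 := by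
        ext; push_cast; linarith [hc'.1]
      rw [h2, dartSign]
      simp only [neg_mul, mul_neg, neg_neg, neg_inj]
      rw [← mul_assoc, mul_assoc d.1.2, Int.units_mul_self, mul_one]

theorem Ft_dart {V : Type} (G : BGraph V) (d : BDart V) (h : Sym2.mk d.1 d.2 ∈ Ft G) :
    ∃ l, IsWalk G d.1.1 l d.2.1 ∧ (l.map dartSign).prod = dartSign d := by
  obtain ⟨x, α, y, β, l, hl, he⟩ := h
  have hs := bwalk_sign _ _ _ _ _ _ hl.1
  rcases Sym2.eq_iff.1 he with ⟨h1, h2⟩ | ⟨h1, h2⟩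
  · exact ⟨l, by rw [h1, h2]; exact hl.1.2.1, by rw [hs, dartSign, h1, h2]⟩
  · obtain ⟨l', h3, h4⟩ := walk_reverse _ _ _ _ hl.1.2.1
    exact ⟨l', by rw [h1, h2]; exact h3, by rw [h4, hs, dartSign, h1, h2, mul_comm]⟩

theorem Ft_walk {V : Type} (G : BGraph V) (l : List (BDart V)) (x y : V)
    (h : IsWalk (Ft G) x l y) :
    ∃ l', IsWalk G x l' y ∧ (l'.map dartSign).prod = (l.map dartSign).prod := by
  induction l generalizing x with
  | nil => exact ⟨[], h, rfl⟩
  | cons d l ih =>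
    obtain ⟨rfl, h2, h3⟩ := h
    obtain ⟨a, ha, hs⟩ := Ft_dart G d h2
    obtain ⟨b, hb, ht⟩ := ih _ h3
    exact ⟨a ++ b, (walk_append _ _ _ _ _).2 ⟨_, ha, hb⟩, by simp [hs, ht]⟩

theorem pos_walk {V : Type} (G : BGraph V) (hG : IsAllPositive G) (l : List (BDart V)) (x y : V)
    (h : IsWalk G x l y) : (l.map dartSign).prod = 1 := by
  induction l generalizing x with
  | nil => rfl
  | cons d l ih =>
    rw [List.map_cons, List.prod_cons, hG d h.2.1, ih _ h.2.2, one_mul]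

/-- The transitive closure of an all-positive bidirected graph is all
positive, and the transitive closure of a balanced bidirected graph is balanced. -/
theorem stmt9 {V : Type} [Fintype V] (G : BGraph V) :
    (IsAllPositive G → IsAllPositive (Ft G)) ∧ (IsBalanced G → IsBalanced (Ft G)) := by
  refine ⟨fun hG d hd => ?_, fun hG x l hl => ?_⟩
  · obtain ⟨l, hl, hs⟩ := Ft_dart G d hd
    rw [← hs]; exact pos_walk G hG l _ _ hl
  · obtain ⟨l', hl', hs⟩ := Ft_walk G l x x hl.2.1
    rw [← hs]; exact closed_walk G hG _ l' x rfl hl'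
end

section
/- If G_τ is a connected bidirected graph, then every transitive reduction Rt(G_τ) is connected. -/
/-- Connectedness of the underlying graph of a bidirected graph. -/
def Connected {V : Type} (G : BGraph V) : Prop := ∀ x y : V, ∃ l, IsWalk G x l y

theorem isWalk_append_aux {V : Type} (H : BGraph V) (l m : List (BDart V)) :
    ∀ x y z : V, IsWalk H x l y → IsWalk H y m z → IsWalk H x (l ++ m) z := by
  induction l with
  | nil => intro x y z h1 h2; cases h1; exact h2
  | cons d l ih => intro x y z h1 h2; exact ⟨h1.1, h1.2.1, ih _ _ _ h1.2.2 h2⟩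

theorem isWalk_symm_aux {V : Type} (H : BGraph V) (l : List (BDart V)) :
    ∀ x y : V, IsWalk H x l y → ∃ m, IsWalk H y m x := by
  induction l with
  | nil => intro x y h1; cases h1; exact ⟨[], rfl⟩
  | cons d l ih =>
    intro x y h1
    obtain ⟨m, hm⟩ := ih _ _ h1.2.2
    refine ⟨m ++ [(d.2, d.1)], isWalk_append_aux H _ _ _ _ _ hm ⟨rfl, ?_, h1.1⟩⟩
    have := h1.2.1
    rw [Sym2.eq_swap] at this
    exact this

theorem edge_walk_aux {V : Type} (G H : BGraph V) (h : ft G H = G) (a b : SV V)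
    (hab : Sym2.mk a b ∈ G) : ∃ l, IsWalk H a.1 l b.1 := by
  rw [← h] at hab
  rcases hab with hab | ⟨_, x, α, y, β, l, hl, he⟩
  · exact ⟨[(a, b)], rfl, hab, rfl⟩
  · have hw := hl.1.2.1
    rcases Sym2.eq_iff.1 he with ⟨rfl, rfl⟩ | ⟨rfl, rfl⟩
    · exact ⟨l, hw⟩
    · exact isWalk_symm_aux H l _ _ hw

theorem walk_walk_aux {V : Type} (G H : BGraph V) (h : ft G H = G) (l : List (BDart V)) :
    ∀ x y : V, IsWalk G x l y → ∃ m, IsWalk H x m y := by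
  induction l with
  | nil => intro x y h1; exact ⟨[], h1⟩
  | cons d l ih =>
    intro x y h1
    obtain ⟨m, hm⟩ := ih _ _ h1.2.2
    obtain ⟨k, hk⟩ := edge_walk_aux G H h _ _ h1.2.1
    obtain ⟨rfl, -⟩ := h1
    exact ⟨k ++ m, isWalk_append_aux H _ _ _ _ _ hk hm⟩

/-- If `G` is a connected bidirected graph, then every transitive
reduction of `G` is connected. -/
theorem stmt13 {V : Type} [Fintype V] (G H : BGraph V) (hconn : Connected G)
    (h : IsTR G H) : Connected H := by
  intro x y
  obtain ⟨l, hl⟩ := hconn x y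
  exact walk_walk_aux G H h.2.1 l x y hl
end

section
/- Let G_τ be a bidirected graph with no positive loops. If G_τ contains no b-path of length greater than 1, then G_τ is its own unique transitive reduction (Rt(G_τ) = G_τ) and every vertex of G_τ is a source or a sink. -/
theorem aux_ss {V : Type} (G : BGraph V)
    (hloop : ∀ (x : V) (α β : ℤˣ), Sym2.mk (x, α) (x, β) ∈ G → -(α * β) ≠ 1)
    (hpath : ∀ x α l y β, IsBPath G x α l y β → l.length ≤ 1)
    (x : V) (p q : SV V) (h1 : Sym2.mk (x, (1 : ℤˣ)) p ∈ G)
    (h2 : Sym2.mk (x, (-1 : ℤˣ)) q ∈ G) : False := by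
  obtain ⟨y, β⟩ := p
  obtain ⟨z, γ⟩ := q
  have key : IsBPath G y β [((y, β), (x, 1)), ((x, -1), (z, γ))] z γ := by
    refine ⟨⟨by simp, ?_, by simp, by simp, List.isChain_pair.2 (by simp)⟩, ?_⟩
    · refine ⟨rfl, ?_, rfl, h2, rfl⟩
      rw [Sym2.eq_swap]; exact h1
    · intro l' hl hne hw
      obtain ⟨hn, hwk, hh, hg, hc⟩ := hw
      have hcases : l' = [] ∨ l' = [((x, -1), (z, γ))] ∨ l' = [((y, β), (x, 1))] := by
        have := List.mem_sublists.2 hl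
        simp [List.sublists] at this
        tauto
      rcases hcases with rfl | rfl | rfl
      · exact hn rfl
      · simp [IsWalk] at hwk hh
        obtain ⟨rfl, -⟩ := hwk
        subst hh
        exact hloop _ _ _ h1 (by simp)
      · simp [IsWalk] at hwk hg
        obtain ⟨-, rfl⟩ := hwk
        subst hg
        exact hloop _ _ _ h2 (by simp)
  have := hpath _ _ _ _ _ key
  simp at this

theorem aux_ft {V : Type} (G : BGraph V)
    (hloop : ∀ (x : V) (α β : ℤˣ), Sym2.mk (x, α) (x, β) ∈ G → -(α * β) ≠ 1)
    (hpath : ∀ x α l y β, IsBPath G x α l y β → l.length ≤ 1)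
    (H : BGraph V) (hH : H ⊆ G) (hft : ft G H = G) : H = G := by
  refine Set.Subset.antisymm hH fun e he => ?_
  rw [← hft] at he
  rcases he with he | ⟨-, x, α, y, β, l, ⟨⟨hn, hwk, hh, hg, hc⟩, -⟩, rfl⟩
  · exact he
  match l, hn, hwk, hh, hg, hc with
  | [((a, s), (b, t))], _, hwk, hh, hg, _ =>
    simp [IsWalk] at hwk hh hg
    obtain ⟨rfl, h, rfl⟩ := hwk
    subst hh hg
    exact h
  | ((a, s), (b, t)) :: ((c, u), (d, v)) :: l, _, hwk, _, _, hc =>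
    exfalso
    obtain ⟨-, h1, h3, h2, -⟩ := hwk
    have hs : (t : ℤ) + (u : ℤ) = 0 := (List.isChain_cons_cons.1 hc).1
    simp only at h1 h2 h3
    subst h3
    have h1' := hH h1
    have h2' := hH h2
    rw [Sym2.eq_swap] at h1'
    rcases Int.units_eq_one_or t with rfl | rfl <;> rcases Int.units_eq_one_or u with rfl | rfl
    · simp at hs
    · exact aux_ss G hloop hpath _ _ _ h1' h2'
    · exact aux_ss G hloop hpath _ _ _ h2' h1'
    · simp at hs

/-- Let `G` be a bidirected graph with no positive loops. If `G`
contains no b-path of length greater than `1`, then `G` is its own unique transitive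
reduction, and every vertex of `G` is a source or a sink. -/
theorem stmt14 {V : Type} [Fintype V] (G : BGraph V)
    (hloop : ∀ (x : V) (α β : ℤˣ), Sym2.mk (x, α) (x, β) ∈ G → -(α * β) ≠ 1)
    (hpath : ∀ x α l y β, IsBPath G x α l y β → l.length ≤ 1) :
    (IsTR G G ∧ ∀ H, IsTR G H → H = G) ∧
      ∀ x : V,
        (∀ (α : ℤˣ) (e : Sym2 (SV V)), e ∈ G → (x, α) ∈ e → α = 1) ∨
        (∀ (α : ℤˣ) (e : Sym2 (SV V)), e ∈ G → (x, α) ∈ e → α = -1) := by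
  refine ⟨⟨⟨subset_rfl, ?_, ?_⟩, fun H hH => aux_ft G hloop hpath H hH.1 hH.2.1⟩, ?_⟩
  · exact Set.Subset.antisymm (Set.union_subset subset_rfl fun e he => he.1)
      Set.subset_union_left
  · intro H' hs hft
    exact hs.ne (aux_ft G hloop hpath H' hs.subset hft)
  · intro x
    by_contra hcon
    rw [not_or] at hcon
    obtain ⟨ha, hb⟩ := hcon
    push Not at ha hb
    obtain ⟨α, e, he, hxe, hα⟩ := ha
    obtain ⟨β, f, hf, hxf, hβ⟩ := hb
    obtain ⟨p, rfl⟩ := hxe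
    obtain ⟨q, rfl⟩ := hxf
    obtain rfl : α = -1 := (Int.units_eq_one_or α).resolve_left hα
    obtain rfl : β = 1 := (Int.units_eq_one_or β).resolve_right hβ
    exact aux_ss G hloop hpath x q p hf he
end

section
/- Let G_τ be a bidirected graph and Rt(G_τ) any transitive reduction of G_τ. Then (i) Rt(G_τ) is balanced if, and only if, G_τ is balanced, and (ii) Rt(G_τ) is all positive if, and only if, G_τ is all positive. -/
theorem aux_dup {A B : Type} (f : A → B) : ∀ l : List A, ¬ (l.map f).Nodup →
    ∃ l1 d l2 d' l3, l = l1 ++ d :: (l2 ++ d' :: l3) ∧ f d = f d'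
  | [], h => by simp at h
  | a :: l, h => by
    by_cases hl : (l.map f).Nodup
    · have hm : f a ∈ l.map f := by
        by_contra hc
        exact h (by rw [List.map_cons, List.nodup_cons]; exact ⟨hc, hl⟩)
      obtain ⟨d', hd', he⟩ := List.mem_map.1 hm
      obtain ⟨s, t, rfl⟩ := List.append_of_mem hd'
      exact ⟨[], a, s, d', t, rfl, he.symm⟩
    · obtain ⟨l1, d, l2, d', l3, rfl, he⟩ := aux_dup f l hl
      exact ⟨a :: l1, d, l2, d', l3, rfl, he⟩

theorem aux_append {V : Type} (G : BGraph V) (y : V) (l' : List (BDart V)) :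
    ∀ (l : List (BDart V)) (x : V),
    IsWalk G x (l ++ l') y ↔ ∃ z, IsWalk G x l z ∧ IsWalk G z l' y
  | [], x => by simp [IsWalk]
  | d :: l, x => by
    simp only [List.cons_append, IsWalk, aux_append G y l' l]
    constructor
    · rintro ⟨a, b, z, c, e⟩
      exact ⟨z, ⟨a, b, c⟩, e⟩
    · rintro ⟨z, ⟨a, b, c⟩, e⟩
      exact ⟨a, b, z, c, e⟩

theorem aux_closed {V : Type} (H : BGraph V) (hb : IsBalanced H) :
    ∀ (n : ℕ) (l : List (BDart V)) (x : V), l.length ≤ n → IsWalk H x l x →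
      (l.map dartSign).prod = 1 := by
  intro n
  induction n with
  | zero =>
    intro l x hl _
    have : l = [] := List.length_eq_zero_iff.1 (by omega)
    simp [this]
  | succ n ih =>
    intro l x hl hw
    have key : ∀ l1 d l2 d' l3, l = l1 ++ d :: (l2 ++ d' :: l3) → d.1.1 = d'.1.1 →
        (l.map dartSign).prod = 1 := by
      rintro l1 d l2 d' l3 rfl he
      obtain ⟨z, h1, h2⟩ := (aux_append H x _ l1 x).1 hw
      obtain ⟨hz, hd, h3⟩ := h2
      obtain ⟨z', h4, h5⟩ := (aux_append H x _ l2 _).1 h3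
      obtain ⟨hz', hd', h6⟩ := h5
      simp only [List.length_append, List.length_cons] at hl
      have e1 := ih (d :: l2) z (by simp only [List.length_cons]; omega)
        ⟨hz, hd, by rw [← hz, he, hz']; exact h4⟩
      have e2 := ih (l1 ++ d' :: l3) x
        (by simp only [List.length_append, List.length_cons]; omega)
        ((aux_append H x _ l1 x).2 ⟨z, h1, by rw [← he, hz], hd', h6⟩)
      simp only [List.map_cons, List.map_append, List.prod_append, List.prod_cons] at e1 e2 ⊢
      calc _ = (dartSign d * (l2.map dartSign).prod) *
            ((l1.map dartSign).prod * (dartSign d' * (l3.map dartSign).prod)) := by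
            ac_rfl
        _ = 1 := by rw [e1, e2, one_mul]
    by_cases h0 : l = []
    · simp [h0]
    by_cases hv : (l.map fun d => d.1.1).Nodup
    · by_cases he : (l.map fun d => Sym2.mk d.1 d.2).Nodup
      · exact hb x l ⟨h0, hw, he, hv⟩
      · obtain ⟨l1, d, l2, d', l3, hl', hdd⟩ := aux_dup _ l he
        rcases Sym2.eq_iff.1 hdd with ⟨h1, -⟩ | ⟨ha, hb'⟩
        · exact key l1 d l2 d' l3 hl' (by rw [h1])
        · subst hl'
          obtain ⟨z, h1, h2⟩ := (aux_append H x _ l1 x).1 hw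
          obtain ⟨hz, hd, h3⟩ := h2
          obtain ⟨z', h4, h5⟩ := (aux_append H x _ l2 _).1 h3
          obtain ⟨hz', hd', h6⟩ := h5
          simp only [List.length_append, List.length_cons] at hl
          have e1 := ih l2 z' (by omega) (by rw [hb', hz'] at h4; exact h4)
          have e2 := ih (l1 ++ l3) x (by simp only [List.length_append]; omega)
            ((aux_append H x _ l1 x).2 ⟨z, h1, by rw [← hz, ha]; exact h6⟩)
          have e3 : dartSign d * dartSign d' = 1 := by
            have : dartSign d' = dartSign d := by
              simp [dartSign, ha, hb', mul_comm]
            rw [this, Int.units_mul_self]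
          simp only [List.map_cons, List.map_append, List.prod_append, List.prod_cons] at e1 e2 ⊢
          calc _ = (dartSign d * dartSign d') * ((l1.map dartSign).prod * (l3.map dartSign).prod)
                * (l2.map dartSign).prod := by ac_rfl
            _ = 1 := by rw [e1, e2, e3]; rfl
    · obtain ⟨l1, d, l2, d', l3, hl', hdd⟩ := aux_dup _ l hv
      exact key l1 d l2 d' l3 hl' hdd

theorem aux_bwalk {V : Type} (H : BGraph V) (y : V) (β : ℤˣ) :
    ∀ (l : List (BDart V)) (x : V) (α : ℤˣ), IsBWalk H x α l y β →
      (l.map dartSign).prod = -(α * β)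
  | [], x, α, h => (h.1 rfl).elim
  | [d], x, α, h => by
    obtain ⟨-, -, h1, h2, -⟩ := h
    simp at h1 h2
    simp [dartSign, h1, h2]
  | d :: d' :: l, x, α, h => by
    obtain ⟨-, hw, h1, h2, h3⟩ := h
    have h3' := List.isChain_cons_cons.1 h3
    have ih := aux_bwalk H y β (d' :: l) d.2.1 d'.1.2
      ⟨by simp, hw.2.2, by simp, by simpa [List.getLast?_cons_cons] using h2, h3'.2⟩
    rw [List.map_cons, List.prod_cons, ih]
    have h1' : d.1.2 = α := h1 d (by simp)
    have h4 : d.2.2 * d'.1.2 = -1 := by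
      have := h3'.1
      rcases Int.units_eq_one_or d.2.2 with a | a <;>
      rcases Int.units_eq_one_or d'.1.2 with b | b <;> simp [a, b] at this ⊢
    rw [dartSign, h1']
    calc -(α * d.2.2) * -(d'.1.2 * β) = α * (d.2.2 * d'.1.2) * β := by
          rw [neg_mul_neg]; ac_rfl
      _ = -(α * β) := by rw [h4]; simp

theorem aux_rev {V : Type} (H : BGraph V) : ∀ (l : List (BDart V)) (x y : V), IsWalk H x l y →
    ∃ l', IsWalk H y l' x ∧ (l'.map dartSign).prod = (l.map dartSign).prod
  | [], x, y, h => ⟨[], Eq.symm h, rfl⟩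
  | d :: l, x, y, h => by
    obtain ⟨h1, h2, h3⟩ := h
    obtain ⟨l', h4, h5⟩ := aux_rev H l _ _ h3
    refine ⟨l' ++ [(d.2, d.1)], (aux_append H x _ l' y).2 ⟨_, h4, rfl, ?_, h1⟩, ?_⟩
    · rw [Sym2.eq_swap]; exact h2
    · simp [h5, dartSign, mul_comm]

theorem aux_edge {V : Type} (G H : BGraph V) (h : ft G H = G) (d : BDart V)
    (hd : Sym2.mk d.1 d.2 ∈ G) :
    ∃ l, IsWalk H d.1.1 l d.2.1 ∧ (l.map dartSign).prod = dartSign d := by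
  rw [← h] at hd
  rcases hd with hd | ⟨-, x, α, y, β, l, hp, he⟩
  · exact ⟨[d], ⟨rfl, hd, rfl⟩, by simp⟩
  · have hs := aux_bwalk H y β l x α hp.1
    have hw := hp.1.2.1
    rcases Sym2.eq_iff.1 he with ⟨h1, h2⟩ | ⟨h1, h2⟩
    · exact ⟨l, by rw [h1, h2]; exact hw, by rw [hs, dartSign, h1, h2]⟩
    · obtain ⟨l', h3, h4⟩ := aux_rev H l _ _ hw
      exact ⟨l', by rw [h1, h2]; exact h3, by rw [h4, hs, dartSign, h1, h2, mul_comm]⟩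

theorem aux_lift {V : Type} (G H : BGraph V) (h : ft G H = G) (y : V) :
    ∀ (l : List (BDart V)) (x : V), IsWalk G x l y →
      ∃ l', IsWalk H x l' y ∧ (l'.map dartSign).prod = (l.map dartSign).prod
  | [], x, hw => ⟨[], hw, rfl⟩
  | d :: l, x, hw => by
    obtain ⟨h1, h2, h3⟩ := hw
    obtain ⟨l1, h4, h5⟩ := aux_edge G H h d h2
    obtain ⟨l2, h6, h7⟩ := aux_lift G H h y l _ h3
    refine ⟨l1 ++ l2, (aux_append H y _ l1 x).2 ⟨_, h1 ▸ h4, h6⟩, by simp [h5, h7]⟩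

theorem aux_mono {V : Type} (G H : BGraph V) (h : H ⊆ G) (y : V) :
    ∀ (l : List (BDart V)) (x : V), IsWalk H x l y → IsWalk G x l y
  | [], _, hw => hw
  | _ :: l, _, hw => ⟨hw.1, h hw.2.1, aux_mono G H h y l _ hw.2.2⟩

theorem aux_pos {V : Type} (H : BGraph V) (hp : IsAllPositive H) (y : V) :
    ∀ (l : List (BDart V)) (x : V), IsWalk H x l y → (l.map dartSign).prod = 1
  | [], _, _ => rfl
  | d :: l, _, hw => by
    rw [List.map_cons, List.prod_cons, hp d hw.2.1, aux_pos H hp y l _ hw.2.2, one_mul]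

/-- For any transitive reduction `H` of `G` : (i) `H` is balanced
if, and only if, `G` is balanced; (ii) `H` is all positive if, and only if, `G` is
all positive. -/
theorem stmt15 {V : Type} [Fintype V] (G H : BGraph V) (h : IsTR G H) :
    (IsBalanced H ↔ IsBalanced G) ∧ (IsAllPositive H ↔ IsAllPositive G) := by
  obtain ⟨hs, hf, -⟩ := h
  refine ⟨⟨fun hb x l hc => ?_, fun hb x l hc => ?_⟩, fun hp d hd => ?_, fun hp d hd => hp d (hs hd)⟩
  · obtain ⟨l', h1, h2⟩ := aux_lift G H hf x l x hc.2.1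
    rw [← h2]
    exact aux_closed H hb _ l' x le_rfl h1
  · exact hb x l ⟨hc.1, aux_mono G H hs x l x hc.2.1, hc.2.2⟩
  · obtain ⟨l, h1, h2⟩ := aux_edge G H hf d hd
    rw [← h2]
    exact aux_pos H hp _ l _ h1
end

section
/- Let G_τ be a bidirected graph containing no b-circuit. Then G_τ has a unique transitive reduction, and it is obtained from G_τ by removing exactly the set R(G_τ) of redundant edges, i.e., the edges {x^α,y^β} of G_τ for which G_τ contains a b-path from x^α to y^β not using that edge. -/
/-- A bidirected graph has no b-circuit if it contains no b-path from `x^α` to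
`x^{-α}` for any vertex `x` and sign `α`. -/
def NoBCircuit {V : Type} (G : BGraph V) : Prop :=
  ¬ ∃ (x : V) (α : ℤˣ) (l : List (BDart V)), IsBPath G x α l x (-α)

/-- The set of redundant edges of `G` : the edges `{x^α, y^β}` of `G` for which `G`
contains a b-path from `x^α` to `y^β` not using that edge. -/
def Redundant {V : Type} (G : BGraph V) : BGraph V :=
  {e | e ∈ G ∧ ∃ x α y β l, e = Sym2.mk (x, α) (y, β) ∧ IsBPath G x α l y β ∧
    e ∉ l.map (fun d => Sym2.mk d.1 d.2)}

namespace BAux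

/-- arcs of the double cover -/
def Arc {V : Type} (G : BGraph V) (u v : SV V) : Prop := Sym2.mk u (v.1, -v.2) ∈ G

lemma sign_iff (a b : ℤˣ) : ((a : ℤ) + (b : ℤ) = 0) ↔ b = -a := by
  rcases Int.units_eq_one_or a with rfl | rfl <;> rcases Int.units_eq_one_or b with rfl | rfl <;>
    decide

lemma bwalk_cons {V : Type} (G : BGraph V) (x : V) (α : ℤˣ) (d : BDart V) (l : List (BDart V))
    (y : V) (β : ℤˣ) :
    IsBWalk G x α (d :: l) y β ↔ d.1 = (x, α) ∧ Sym2.mk d.1 d.2 ∈ G ∧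
      ((l = [] ∧ d.2 = (y, β)) ∨ IsBWalk G d.2.1 (-d.2.2) l y β) := by
  obtain ⟨⟨a, s⟩, ⟨b, t⟩⟩ := d
  cases l with
  | nil => simp [IsBWalk, IsWalk]; tauto
  | cons d' l =>
    simp only [IsBWalk, IsWalk, ne_eq, reduceCtorEq, not_false_eq_true, true_and, false_and,
      false_or, List.head?_cons, Option.mem_def, Option.some.injEq, forall_eq',
      List.getLast?_cons_cons, List.Chain', List.isChain_cons_cons, sign_iff, Prod.mk.injEq]
    tauto

lemma bwalk_edges {V : Type} (G : BGraph V) (l : List (BDart V)) : ∀ (x : V) (α : ℤˣ) (y : V)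
    (β : ℤˣ), IsBWalk G x α l y β → ∀ d ∈ l, Sym2.mk d.1 d.2 ∈ G := by
  induction l with
  | nil => simp
  | cons d l ih =>
    intro x α y β h d' hd'
    rw [bwalk_cons] at h
    obtain ⟨_, h2, h3⟩ := h
    rcases List.mem_cons.1 hd' with rfl | hd'
    · exact h2
    · rcases h3 with ⟨rfl, _⟩ | h3
      · simp at hd'
      · exact ih _ _ _ _ h3 _ hd'

lemma bwalk_mono {V : Type} (G H : BGraph V) (l : List (BDart V)) : ∀ (x : V) (α : ℤˣ) (y : V)
    (β : ℤˣ), IsBWalk G x α l y β → (∀ d ∈ l, Sym2.mk d.1 d.2 ∈ H) → IsBWalk H x α l y β := by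
  induction l with
  | nil => intro x α y β h; exact absurd rfl h.1
  | cons d l ih =>
    intro x α y β h hd
    rw [bwalk_cons] at h ⊢
    refine ⟨h.1, hd d (by simp), ?_⟩
    rcases h.2.2 with h3 | h3
    · exact Or.inl h3
    · exact Or.inr (ih _ _ _ _ h3 fun d' h' => hd d' (by simp [h']))

lemma bpath_mono {V : Type} {G H : BGraph V} (hHG : H ⊆ G) {l : List (BDart V)} {x : V} {α : ℤˣ}
    {y : V} {β : ℤˣ} (h : IsBPath H x α l y β) : IsBPath G x α l y β := by
  have he := bwalk_edges _ _ _ _ _ _ h.1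
  refine ⟨bwalk_mono _ _ _ _ _ _ _ h.1 fun d hd => hHG (he d hd), fun l' hs hne hw => ?_⟩
  exact h.2 l' hs hne (bwalk_mono _ _ _ _ _ _ _ hw fun d hd => he d (hs.subset hd))

lemma exists_bpath {V : Type} (G : BGraph V) (x : V) (α : ℤˣ) (y : V) (β : ℤˣ) :
    ∀ (n : ℕ) (l : List (BDart V)), l.length ≤ n → IsBWalk G x α l y β →
      ∃ l', IsBPath G x α l' y β := by
  intro n
  induction n with
  | zero =>
    intro l hl hw
    exact absurd (List.length_eq_zero_iff.1 (Nat.le_zero.1 hl)) hw.1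
  | succ n ih =>
    intro l hl hw
    by_cases hm : ∀ l', l'.Sublist l → l' ≠ l → ¬ IsBWalk G x α l' y β
    · exact ⟨l, hw, hm⟩
    · push Not at hm
      obtain ⟨l', hs, hne, hw'⟩ := hm
      refine ih l' ?_ hw'
      have h1 := hs.length_le
      have h2 : l'.length ≠ l.length := fun h => hne (hs.eq_of_length h)
      omega

lemma bwalk_transGen {V : Type} (G : BGraph V) (l : List (BDart V)) : ∀ (x : V) (α : ℤˣ) (y : V)
    (β : ℤˣ), IsBWalk G x α l y β → Relation.TransGen (Arc G) (x, α) (y, -β) ∧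
      (l = [((x, α), (y, β))] ∨ ∃ w, Relation.TransGen (Arc G) (x, α) w ∧
        Relation.TransGen (Arc G) w (y, -β)) := by
  induction l with
  | nil => intro x α y β h; exact absurd rfl h.1
  | cons d l ih =>
    intro x α y β h
    rw [bwalk_cons] at h
    obtain ⟨⟨a, s⟩, ⟨b, t⟩⟩ := d
    obtain ⟨h1, h2, h3⟩ := h
    simp only at h1 h2 h3
    rw [h1] at h2 ⊢
    rcases h3 with ⟨rfl, h3⟩ | h3
    · rw [h3] at h2 ⊢
      exact ⟨.single (by simpa [Arc] using h2), Or.inl rfl⟩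
    · have h4 := (ih _ _ _ _ h3).1
      have h5 : Relation.TransGen (Arc G) (x, α) (b, -t) := .single (by simpa [Arc] using h2)
      exact ⟨h5.trans h4, Or.inr ⟨_, h5, h4⟩⟩

lemma transGen_bwalk {V : Type} (G : BGraph V) (u v : SV V) (h : Relation.TransGen (Arc G) u v) :
    ∃ l, IsBWalk G u.1 u.2 l v.1 (-v.2) := by
  induction h using Relation.TransGen.head_induction_on with
  | single h =>
    exact ⟨[(_, (v.1, -v.2))], (bwalk_cons _ _ _ _ _ _ _).2 ⟨rfl, h, Or.inl ⟨rfl, rfl⟩⟩⟩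
  | @head a c h _ ih =>
    obtain ⟨l, hl⟩ := ih
    refine ⟨(a, (c.1, -c.2)) :: l, (bwalk_cons _ _ _ _ _ _ _).2 ⟨rfl, h, Or.inr ?_⟩⟩
    simpa using hl

/-- the sign-reversing involution -/
def inv {V : Type} (u : SV V) : SV V := (u.1, -u.2)

lemma inv_inv {V : Type} (u : SV V) : inv (inv u) = u := by simp [inv]

lemma transGen_inv {V : Type} (G : BGraph V) (u v : SV V) (h : Relation.TransGen (Arc G) u v) :
    Relation.TransGen (Arc G) (inv v) (inv u) := by
  induction h with
  | single h => exact .single (by simpa [Arc, inv, Sym2.eq_swap] using h)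
  | tail _ h ih => exact .head (by simpa [Arc, inv, Sym2.eq_swap] using h) ih

lemma key {V : Type} [Fintype V] (G : BGraph V) (h : NoBCircuit G) (n : ℕ) :
    ∀ u v : SV V, Relation.TransGen (Arc G) u v →
      {w | Relation.TransGen (Arc G) u w ∧ Relation.TransGen (Arc G) w v}.ncard ≤ n →
      Relation.TransGen (Arc (G \ Redundant G)) u v := by
  have acyc : ∀ w : SV V, ¬ Relation.TransGen (Arc G) w w := by
    intro w hw
    obtain ⟨l, hl⟩ := transGen_bwalk _ _ _ hw
    obtain ⟨l', hl'⟩ := exists_bpath _ _ _ _ _ _ l le_rfl hl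
    exact h ⟨_, _, _, hl'⟩
  induction n using Nat.strong_induction_on with
  | _ n ih =>
  intro u v huv hn
  by_cases hw : ∃ w, Relation.TransGen (Arc G) u w ∧ Relation.TransGen (Arc G) w v
  · obtain ⟨w, h1, h2⟩ := hw
    refine Relation.TransGen.trans (b := w) (ih _ (lt_of_lt_of_le ?_ hn) _ _ h1 le_rfl)
      (ih _ (lt_of_lt_of_le ?_ hn) _ _ h2 le_rfl)
    · refine Set.ncard_lt_ncard ⟨fun z hz => ⟨hz.1, hz.2.trans h2⟩, fun hs => ?_⟩ (Set.toFinite _)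
      exact acyc w (hs ⟨h1, h2⟩).2
    · refine Set.ncard_lt_ncard ⟨fun z hz => ⟨h1.trans hz.1, hz.2⟩, fun hs => ?_⟩ (Set.toFinite _)
      exact acyc w (hs ⟨h1, h2⟩).1
  · have ha : Arc G u v := by
      rcases Relation.TransGen.head'_iff.1 huv with ⟨c, h1, h2⟩
      rcases Relation.reflTransGen_iff_eq_or_transGen.1 h2 with rfl | h2
      · exact h1
      · exact absurd ⟨c, .single h1, h2⟩ hw
    refine .single ⟨ha, ?_⟩
    rintro ⟨-, x, α, y, β, l, he, hp, hnot⟩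
    rcases (bwalk_transGen _ _ _ _ _ _ hp.1).2 with rfl | ⟨w, h1, h2⟩
    · exact hnot (by simp [he])
    · rcases Sym2.eq_iff.1 he with ⟨rfl, h4⟩ | ⟨rfl, h4⟩
      · have : v = (y, -β) := by rw [← inv_inv v]; exact congrArg inv h4
        subst this
        exact hw ⟨w, h1, h2⟩
      · have : v = (x, -α) := by rw [← inv_inv v]; exact congrArg inv h4
        subst this
        refine hw ⟨inv w, ?_, transGen_inv _ _ _ h1⟩
        simpa [inv] using transGen_inv _ _ _ h2

lemma ft_red {V : Type} [Fintype V] (G : BGraph V) (h : NoBCircuit G) :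
    ft G (G \ Redundant G) = G := by
  ext e
  constructor
  · rintro (h | h)
    · exact h.1
    · exact h.1
  · intro he
    right
    refine ⟨he, ?_⟩
    induction e using Sym2.ind with
    | _ u v =>
    have := key G h _ u (inv v) (.single (by simpa [Arc, inv] using he)) le_rfl
    obtain ⟨l, hl⟩ := transGen_bwalk _ _ _ this
    obtain ⟨l', hl'⟩ := exists_bpath _ _ _ _ _ _ l le_rfl hl
    exact ⟨_, _, _, _, l', hl', by simp [inv]⟩

lemma red_sub {V : Type} (G H : BGraph V) (hH : H ⊆ G) (hf : ft G H = G) :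
    G \ Redundant G ⊆ H := by
  rintro e ⟨he, hr⟩
  by_contra hn
  have h1 := he
  rw [← hf] at h1
  rcases h1 with h1 | ⟨-, x, α, y, β, l, hp, rfl⟩
  · exact hn h1
  · refine hr ⟨he, x, α, y, β, l, rfl, bpath_mono hH hp, fun hm => hn ?_⟩
    obtain ⟨d, hd, hd'⟩ := List.mem_map.1 hm
    rw [← hd']
    exact bwalk_edges _ _ _ _ _ _ hp.1 d hd

end BAux

/-- A bidirected graph `G` with no b-circuit has a unique transitive
reduction, namely `G` minus its redundant edges. -/
theorem stmt16 {V : Type} [Fintype V] (G : BGraph V) (h : NoBCircuit G) :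
    IsTR G (G \ Redundant G) ∧ ∀ H, IsTR G H → H = G \ Redundant G := by
  refine ⟨⟨Set.sdiff_subset, BAux.ft_red G h, fun H' hH' hf => ?_⟩, fun H hH => ?_⟩
  · exact hH'.2 (BAux.red_sub G H' (hH'.1.trans Set.sdiff_subset) hf)
  · have h1 := BAux.red_sub G H hH.1 hH.2.1
    by_contra hne
    exact hH.2.2 _ ⟨h1, fun h2 => hne (h2.antisymm h1)⟩ (BAux.ft_red G h)
end

section
/- Let G_τ be a bidirected graph containing no b-circuit. Then the (unique) transitive reduction of the transitive closure Ft(G_τ) equals the (unique) transitive reduction of G_τ: Rt(Ft(G_τ)) = Rt(G_τ). -/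
namespace S18

open Relation

def fl {V : Type} (u : SV V) : SV V := (u.1, -u.2)

@[simp] theorem fl_fl {V : Type} (u : SV V) : fl (fl u) = u := by
  simp [fl]

/-- Arcs of the directed double cover. -/
def R {V : Type} (G : BGraph V) (u v : SV V) : Prop := Sym2.mk u (fl v) ∈ G

theorem R_skew {V : Type} {G : BGraph V} {u v : SV V} (h : R G u v) : R G (fl v) (fl u) := by
  unfold R at *
  rw [fl_fl, Sym2.eq_swap]; exact h

theorem T_skew {V : Type} {G : BGraph V} {u v : SV V} (h : TransGen (R G) u v) :
    TransGen (R G) (fl v) (fl u) := by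
  induction h with
  | single h => exact .single (R_skew h)
  | tail _ h ih => exact .head (R_skew h) ih

theorem units_add {a b : ℤˣ} : ((a : ℤ) + (b : ℤ) = 0) ↔ b = -a := by
  rw [Units.ext_iff, Units.val_neg]
  constructor <;> intro h <;> linarith

theorem walk_of_T {V : Type} {G : BGraph V} {u v : SV V} (h : TransGen (R G) u v) :
    ∃ l, IsBWalk G u.1 u.2 l v.1 (-v.2) := by
  induction h using TransGen.head_induction_on with
  | @single a h => exact ⟨[(a, fl v)], by simp, ⟨rfl, h, rfl⟩, by simp, by simp [fl], List.isChain_singleton _⟩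
  | @head a c h _ ih =>
    obtain ⟨l, h0, h1, h2, h3, h4⟩ := ih
    refine ⟨(a, fl c) :: l, by simp, ⟨rfl, h, h1⟩, by simp, ?_, ?_⟩
    · cases l with
      | nil => exact absurd rfl h0
      | cons d l => simpa [List.getLast?_cons_cons] using h3
    · cases l with
      | nil => exact absurd rfl h0
      | cons d l =>
        have := h2 d (by simp)
        refine List.isChain_cons_cons.2 ⟨?_, h4⟩
        rw [units_add]
        simp [fl, this]

theorem T_of_walk {V : Type} {G : BGraph V} (l : List (BDart V)) {x α y β}
    (h : IsBWalk G x α l y β) : TransGen (R G) (x, α) (y, -β) := by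
  induction l generalizing x α with
  | nil => exact absurd rfl h.1
  | cons d l ih =>
    obtain ⟨h0, ⟨rfl, he, h1⟩, h2, h3, h4⟩ := h
    have h2 := h2 d (by simp)
    subst h2
    have hR : R G (d.1.1, d.1.2) (fl d.2) := by simpa [R] using he
    cases l with
    | nil =>
      have h3 := h3 d (by simp)
      have h1 : d.2.1 = y := h1
      subst h1 h3
      exact .single hR
    | cons d' l =>
      obtain ⟨h5, h6⟩ := List.isChain_cons_cons.1 h4
      rw [units_add] at h5
      refine .head hR (ih ⟨by simp, h1, ?_, ?_, h6⟩)
      · simp [fl, h5]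
      · simpa [List.getLast?_cons_cons] using h3

theorem path_of_walk {V : Type} {G : BGraph V} {x α y β} (n : ℕ) :
    ∀ l : List (BDart V), l.length = n → IsBWalk G x α l y β → ∃ l, IsBPath G x α l y β := by
  induction n using Nat.strong_induction_on with
  | _ n ih =>
    intro l hl hw
    by_cases hp : IsBPath G x α l y β
    · exact ⟨l, hp⟩
    · have : ∃ l', l'.Sublist l ∧ l' ≠ l ∧ IsBWalk G x α l' y β := by
        by_contra hc
        exact hp ⟨hw, fun l' h1 h2 h3 => hc ⟨l', h1, h2, h3⟩⟩
      obtain ⟨l', h1, h2, h3⟩ := this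
      refine ih l'.length ?_ l' rfl h3
      rw [← hl]
      exact lt_of_le_of_ne h1.length_le fun h => h2 (h1.eq_of_length h)

theorem path_iff {V : Type} {G : BGraph V} {x α y β} :
    (∃ l, IsBPath G x α l y β) ↔ TransGen (R G) (x, α) (y, -β) := by
  constructor
  · rintro ⟨l, h⟩; exact T_of_walk l h.1
  · intro h
    obtain ⟨l, hl⟩ := walk_of_T h
    exact path_of_walk _ l rfl (by simpa using hl)

theorem mem_paths {V : Type} {G : BGraph V} {u v : SV V} :
    (∃ x α y β l, IsBPath G x α l y β ∧ Sym2.mk u v = Sym2.mk (x, α) (y, β)) ↔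
      TransGen (R G) u (fl v) := by
  constructor
  · rintro ⟨x, α, y, β, l, h, he⟩
    have h := path_iff.1 ⟨l, h⟩
    rcases Sym2.eq_iff.1 he with ⟨rfl, rfl⟩ | ⟨rfl, rfl⟩
    · exact h
    · have := T_skew h
      simpa [fl] using this
  · intro h
    obtain ⟨l, hl⟩ := path_iff.2 (show TransGen (R G) (u.1, u.2) (v.1, -v.2) from h)
    exact ⟨_, _, _, _, l, hl, rfl⟩

theorem T_cov {W : Type} [Finite W] (T : W → W → Prop) (ht : ∀ a b c, T a b → T b c → T a c)
    (hi : ∀ a, ¬ T a a) (n : ℕ) : ∀ u v, T u v → {z | T u z ∧ T z v}.ncard = n →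
    TransGen (fun u v => T u v ∧ ¬ ∃ z, T u z ∧ T z v) u v := by
  induction n using Nat.strong_induction_on with
  | _ n ih =>
    intro u v h hn
    by_cases hc : ∃ z, T u z ∧ T z v
    · obtain ⟨z, h1, h2⟩ := hc
      subst hn
      refine .trans (ih _ ?_ u z h1 rfl) (ih _ ?_ z v h2 rfl)
      · refine Set.ncard_lt_ncard ⟨fun w hw => ⟨hw.1, ht _ _ _ hw.2 h2⟩, fun hs => ?_⟩
          (Set.toFinite _)
        exact hi z (hs (show z ∈ {z | T u z ∧ T z v} from ⟨h1, h2⟩)).2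
      · refine Set.ncard_lt_ncard ⟨fun w hw => ⟨ht _ _ _ h1 hw.1, hw.2⟩, fun hs => ?_⟩
          (Set.toFinite _)
        exact hi z (hs (show z ∈ {z | T u z ∧ T z v} from ⟨h1, h2⟩)).1
    · exact .single ⟨h, hc⟩

def Red {V : Type} (T : SV V → SV V → Prop) : BGraph V :=
  {e | ∃ u v, e = Sym2.mk u (fl v) ∧ T u v ∧ ¬ ∃ z, T u z ∧ T z v}

theorem tr_eq {V : Type} [Fintype V] {G H : BGraph V} (hi : ∀ a, ¬ TransGen (R G) a a)
    (h : IsTR G H) : H = Red (TransGen (R G)) := by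
  obtain ⟨hs, hf, hm⟩ := h
  have hGH : ∀ u v, R G u v → TransGen (R H) u v := by
    intro u v huv
    unfold R at huv
    rw [← hf] at huv
    rcases huv with huv | ⟨_, huv⟩
    · exact .single huv
    · simpa using mem_paths.1 huv
  have hHG : ∀ u v, TransGen (R H) u v → TransGen (R G) u v :=
    fun u v h => TransGen.mono (show R H ≤ R G from fun a b hab => hs hab) _ _ h
  have hT : ∀ u v, TransGen (R G) u v → TransGen (R H) u v := by
    intro u v h
    induction h with
    | single h => exact hGH _ _ h
    | tail _ h ih => exact ih.trans (hGH _ _ h)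
  have hRH : Red (TransGen (R G)) ⊆ H := by
    rintro e ⟨u, v, rfl, huv, hn⟩
    rcases TransGen.tail'_iff.1 (hT _ _ huv) with ⟨z, h1, h2⟩
    rcases reflTransGen_iff_eq_or_transGen.1 h1 with rfl | h1
    · exact h2
    · exact absurd ⟨z, hHG _ _ h1, hHG _ _ (.single h2)⟩ hn
  by_contra hne
  refine hm _ (hRH.ssubset_of_ne (Ne.symm hne)) ?_
  apply Set.Subset.antisymm
  · rintro e (he | he)
    · exact hs (hRH he)
    · exact he.1
  · intro e
    induction e using Sym2.ind with
    | _ u w =>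
    intro he
    refine Or.inr ⟨he, mem_paths.2 ?_⟩
    have h1 : TransGen (R G) u (fl w) := .single (by simpa [R] using he)
    have := T_cov (TransGen (R G)) (fun _ _ _ => TransGen.trans) hi _ u (fl w) h1 rfl
    exact TransGen.mono (fun a b hab => ⟨a, b, rfl, hab⟩) _ _ this

theorem T_Ft {V : Type} (G : BGraph V) : TransGen (R (Ft G)) = TransGen (R G) := by
  have key : ∀ u v, R (Ft G) u v ↔ TransGen (R G) u v := by
    intro u v
    have := mem_paths (G := G) (u := u) (v := fl v)
    rw [fl_fl] at this
    exact this
  have : R (Ft G) = TransGen (R G) := by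
    funext u v; exact propext (key u v)
  rw [this]
  exact transGen_idem

end S18

/-- If a bidirected graph `G` contains no b-circuit, then the
(unique) transitive reduction of `Ft G` equals the (unique) transitive reduction
of `G`. -/
theorem stmt18 {V : Type} [Fintype V] (G : BGraph V) (h : NoBCircuit G) :
    ∀ H K, IsTR (Ft G) H → IsTR G K → H = K := by
  intro H K hH hK
  have hi : ∀ a, ¬ Relation.TransGen (S18.R G) a a := by
    rintro ⟨x, α⟩ ha
    obtain ⟨l, hl⟩ := S18.path_iff.2
      (show Relation.TransGen (S18.R G) (x, α) (x, - -α) by simpa using ha)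
    exact h ⟨x, α, l, hl⟩
  rw [S18.tr_eq hi hK, S18.tr_eq (by rw [S18.T_Ft]; exact hi) hH, S18.T_Ft]
end

section
/- A connected signed graph G_σ is quasibalanced if, and only if, every two negative cycles C and C′ of G_σ satisfy |V(C) ∩ V(C′)| ≥ 2. -/
/-- A signed graph on vertex type `V` and edge type `E`: each edge `e` has two
ends `ends e true` and `ends e false` (so loops and multiple edges are allowed)
and a sign `sgn e : ℤˣ`. -/
structure SGraph (V E : Type) where
  ends : E → Bool → V
  sgn : E → ℤˣ

namespace SGraph

variable {V E : Type}

/-- The initial vertex of a dart (an edge together with a direction of traversal). -/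
def src (G : SGraph V E) (d : E × Bool) : V := G.ends d.1 d.2

/-- The terminal vertex of a dart. -/
def dst (G : SGraph V E) (d : E × Bool) : V := G.ends d.1 (!d.2)

/-- `G.IsWalk x l y` : the list of darts `l` forms a chain from `x` to `y` in `G`. -/
def IsWalk (G : SGraph V E) : V → List (E × Bool) → V → Prop
  | x, [], y => x = y
  | x, d :: l, y => G.src d = x ∧ IsWalk G (G.dst d) l y

/-- A cycle at `x` : a nonempty closed chain whose edges are pairwise distinct and
whose vertices are pairwise distinct. -/
def IsCycle (G : SGraph V E) (x : V) (l : List (E × Bool)) : Prop :=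
  l ≠ [] ∧ G.IsWalk x l x ∧ (l.map Prod.fst).Nodup ∧ (l.map G.src).Nodup

/-- The sign of a chain : the product of the signs of its edges. -/
def chainSign (G : SGraph V E) (l : List (E × Bool)) : ℤˣ :=
  (l.map fun d => G.sgn d.1).prod

/-- A signed graph is balanced if every cycle is positive. -/
def Balanced (G : SGraph V E) : Prop :=
  ∀ x l, G.IsCycle x l → G.chainSign l = 1

/-- The signed graph obtained by negating the sign of every edge. -/
def neg (G : SGraph V E) : SGraph V E := ⟨G.ends, fun e => -(G.sgn e)⟩

/-- A signed graph is antibalanced if negating all edge signs yields a balanced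
signed graph. -/
def Antibalanced (G : SGraph V E) : Prop := G.neg.Balanced

end SGraph

namespace SGraph

variable {V E : Type}

/-- The vertex set of a closed chain `l` (the set of its sources). -/
def vSet (G : SGraph V E) (l : List (E × Bool)) : Set V := {v | v ∈ l.map G.src}

/-- The edge set of a chain. -/
def eSet (l : List (E × Bool)) : Set E := {e | e ∈ l.map Prod.fst}

/-- A negative cycle. -/
def IsNegCycle (G : SGraph V E) (x : V) (l : List (E × Bool)) : Prop :=
  G.IsCycle x l ∧ G.chainSign l = -1

/-- Type (ii) configuration : the union of two (distinct) negative cycles having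
exactly one common vertex. -/
def TypeII (G : SGraph V E) : Prop :=
  ∃ x l x' l' v, G.IsNegCycle x l ∧ G.IsNegCycle x' l' ∧ eSet l ≠ eSet (E := E) l' ∧
    G.vSet l ∩ G.vSet l' = {v}

/-- An elementary chain from `x` to `y` (no repeated vertices). -/
def IsPath (G : SGraph V E) (x : V) (l : List (E × Bool)) (y : V) : Prop :=
  G.IsWalk x l y ∧ (x :: l.map G.dst).Nodup

/-- Type (iii) configuration : the union of two vertex-disjoint negative cycles and
an elementary chain connecting them which is internally disjoint from both cycles. -/
def TypeIII (G : SGraph V E) : Prop :=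
  ∃ x l x' l' a p b, G.IsNegCycle x l ∧ G.IsNegCycle x' l' ∧
    G.vSet l ∩ G.vSet l' = ∅ ∧ G.IsPath a p b ∧ a ∈ G.vSet l ∧ b ∈ G.vSet l' ∧
    ∀ v ∈ (p.map G.dst).dropLast, v ∉ G.vSet l ∪ G.vSet l'

/-- A signed graph is quasibalanced if it contains no configuration of type (ii)
or of type (iii). -/
def Quasibalanced (G : SGraph V E) : Prop := ¬ G.TypeII ∧ ¬ G.TypeIII

/-- Connectedness of the underlying graph. -/
def Connected (G : SGraph V E) : Prop := ∀ x y : V, ∃ l, G.IsWalk x l y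

end SGraph

namespace SGraph

variable {V E : Type}

theorem isWalk_append (G : SGraph V E) (l₁ l₂ : List (E × Bool)) (x y : V) :
    G.IsWalk x (l₁ ++ l₂) y ↔ ∃ z, G.IsWalk x l₁ z ∧ G.IsWalk z l₂ y := by
  induction l₁ generalizing x with
  | nil => simp [IsWalk]
  | cons d l ih => simp [IsWalk, ih, and_assoc]

theorem isWalk_split (G : SGraph V E) (l₁ l₂ : List (E × Bool)) (e : E × Bool) (x y : V)
    (h : G.IsWalk x (l₁ ++ e :: l₂) y) :
    G.IsWalk x (l₁ ++ [e]) (G.dst e) ∧ G.IsWalk (G.dst e) l₂ y := by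
  rw [isWalk_append] at h
  obtain ⟨z, h1, h2, h3⟩ := h
  exact ⟨(isWalk_append _ _ _ _ _).2 ⟨z, h1, h2, rfl⟩, h3⟩

theorem shortest_nodup (G : SGraph V E) (l : List (E × Bool)) (x y : V)
    (h : G.IsWalk x l y) (hmin : ∀ l', G.IsWalk x l' y → l.length ≤ l'.length) :
    (x :: l.map G.dst).Nodup := by
  induction l generalizing x with
  | nil => simp
  | cons d l ih =>
    rw [List.nodup_cons]
    constructor
    · intro hx
      obtain ⟨e, he, hex⟩ := List.mem_map.1 hx
      obtain ⟨l₁, l₂, hl⟩ := List.append_of_mem he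
      have h' := h
      rw [hl] at h'
      have h2 := (isWalk_split _ _ _ _ _ _ h').2
      rw [hex] at h2
      have h3 := hmin _ h2
      rw [hl] at h3
      simp at h3
      omega
    · refine ih (G.dst d) h.2 ?_
      intro l' hl'
      have := hmin (d :: l') ⟨h.1, hl'⟩
      simpa using this

theorem exists_conn_path (G : SGraph V E) (hconn : G.Connected) (A B : Set V)
    (hA : A.Nonempty) (hB : B.Nonempty) :
    ∃ a p b, G.IsPath a p b ∧ a ∈ A ∧ b ∈ B ∧
      ∀ v ∈ (p.map G.dst).dropLast, v ∉ A ∪ B := by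
  classical
  have hex : ∃ n, ∃ a p b, G.IsWalk a p b ∧ a ∈ A ∧ b ∈ B ∧ p.length = n := by
    obtain ⟨a, ha⟩ := hA
    obtain ⟨b, hb⟩ := hB
    obtain ⟨p, hp⟩ := hconn a b
    exact ⟨_, a, p, b, hp, ha, hb, rfl⟩
  obtain ⟨a, p, b, hp, ha, hb, hn⟩ := Nat.find_spec hex
  have hmin : ∀ a' p' b', G.IsWalk a' p' b' → a' ∈ A → b' ∈ B → p.length ≤ p'.length := by
    intro a' p' b' h1 h2 h3
    rw [hn]
    exact Nat.find_min' hex ⟨a', p', b', h1, h2, h3, rfl⟩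
  refine ⟨a, p, b, ⟨hp, shortest_nodup G p a b hp fun l' h => hmin _ _ _ h ha hb⟩, ha, hb, ?_⟩
  intro v hv
  rw [← List.map_dropLast] at hv
  obtain ⟨e, he, rfl⟩ := List.mem_map.1 hv
  obtain ⟨l₁, l₂, hl⟩ := List.append_of_mem he
  have hne : p ≠ [] := by rintro rfl; simp at he
  have hpe : p = l₁ ++ e :: (l₂ ++ [p.getLast hne]) := by
    conv_lhs => rw [← List.dropLast_append_getLast hne, hl]
    simp
  generalize p.getLast hne = w at hpe
  have hlen : p.length = l₁.length + (l₂.length + 1 + 1) := by rw [hpe]; simp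
  have h' := hp
  rw [hpe] at h'
  obtain ⟨h1, h2⟩ := isWalk_split _ _ _ _ _ _ h'
  rintro (hv | hv)
  · have := hmin _ _ _ h2 hv hb
    simp at this
    omega
  · have := hmin _ _ _ h1 ha hv
    simp at this
    omega

theorem dst_mem (G : SGraph V E) (l : List (E × Bool)) (x y : V) (h : G.IsWalk x l y)
    (d : E × Bool) (hd : d ∈ l) : G.dst d = y ∨ G.dst d ∈ G.vSet l := by
  obtain ⟨l₁, l₂, rfl⟩ := List.append_of_mem hd
  have h2 := (isWalk_split _ _ _ _ _ _ h).2
  cases l₂ with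
  | nil => exact Or.inl h2
  | cons c t => right; simp [vSet, ← h2.1]

theorem start_mem (G : SGraph V E) (l : List (E × Bool)) (x : V) (h : G.IsCycle x l) :
    x ∈ G.vSet l := by
  obtain ⟨h0, h1, -⟩ := h
  cases l with
  | nil => exact absurd rfl h0
  | cons c t => simp [vSet, ← h1.1]

theorem ends_mem (G : SGraph V E) (l : List (E × Bool)) (x : V) (h : G.IsCycle x l)
    (e : E) (he : e ∈ eSet l) (b : Bool) : G.ends e b ∈ G.vSet l := by
  obtain ⟨d, hd, rfl⟩ := List.mem_map.1 he
  by_cases hb : b = d.2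
  · subst hb
    exact List.mem_map.2 ⟨d, hd, rfl⟩
  · have hb' : b = !d.2 := by cases b <;> cases h : d.2 <;> simp_all
    subst hb'
    rcases dst_mem G l x x h.2.1 d hd with h1 | h1
    · have := start_mem G l x h
      rw [← h1] at this
      exact this
    · exact h1

theorem eSet_ne (G : SGraph V E) (l l' : List (E × Bool)) (x x' : V) (h : G.IsCycle x l)
    (h' : G.IsCycle x' l') (hd : G.vSet l ∩ G.vSet l' = ∅) :
    eSet l ≠ eSet (E := E) l' := by
  intro heq
  obtain ⟨d, hd'⟩ := List.exists_mem_of_ne_nil _ h.1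
  have he : d.1 ∈ eSet l := List.mem_map.2 ⟨d, hd', rfl⟩
  have he' := he
  rw [heq] at he'
  have : G.ends d.1 true ∈ G.vSet l ∩ G.vSet l' :=
    ⟨ends_mem G l x h _ he true, ends_mem G l' x' h' _ he' true⟩
  rw [hd] at this
  exact this

end SGraph

/-- A connected signed graph `G` is quasibalanced if, and only if,
every two (distinct) negative cycles `C` and `C'` of `G` satisfy `|V(C) ∩ V(C')| ≥ 2`. -/
theorem stmt19 {V E : Type} [Fintype V] [Fintype E] (G : SGraph V E)
    (hconn : G.Connected) :
    G.Quasibalanced ↔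
      ∀ x l x' l', G.IsNegCycle x l → G.IsNegCycle x' l' →
        SGraph.eSet (E := E) l ≠ SGraph.eSet (E := E) l' →
        2 ≤ (G.vSet l ∩ G.vSet l').ncard := by
  constructor
  · rintro ⟨hII, hIII⟩ x l x' l' h h' hne
    by_contra hlt
    have hc : (G.vSet l ∩ G.vSet l').ncard = 0 ∨ (G.vSet l ∩ G.vSet l').ncard = 1 := by omega
    rcases hc with h0 | h1
    · rw [Set.ncard_eq_zero (Set.toFinite _)] at h0
      obtain ⟨a, p, b, hp, ha, hb, hint⟩ := G.exists_conn_path hconn (G.vSet l) (G.vSet l')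
        ⟨x, G.start_mem l x h.1⟩ ⟨x', G.start_mem l' x' h'.1⟩
      exact hIII ⟨x, l, x', l', a, p, b, h, h', h0, hp, ha, hb, hint⟩
    · obtain ⟨v, hv⟩ := Set.ncard_eq_one.1 h1
      exact hII ⟨x, l, x', l', v, h, h', hne, hv⟩
  · intro H
    constructor
    · rintro ⟨x, l, x', l', v, h, h', hne, hv⟩
      have := H x l x' l' h h' hne
      rw [hv, Set.ncard_singleton] at this
      omega
    · rintro ⟨x, l, x', l', a, p, b, h, h', hd, -⟩
      have := H x l x' l' h h' (G.eSet_ne l l' x x' h.1 h'.1 hd)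
      rw [hd, Set.ncard_empty] at this
      omega
end
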